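/- arXiv:2512.09899 — 4 statements merged into one kernel-verified Lean document; each statement's English description precedes it below -/
import Mathlib

section
/- Let a and b be points in the Euclidean plane ℝ² with dist(a,b) = 2, and let L = closedBall(a,2) ∩ closedBall(b,2) be the lens of the two radius-2 disks centered at a and b. Let p, q ∈ L be two points lying on the same closed side of the line through a and b; that is, writing cross((u₁,u₂),(v₁,v₂)) = u₁v₂ − u₂v₁, assume cross(b − a, p − a) ≥ 0 and cross(b − a, q − a) ≥ 0 (or both cross products are ≤ 0). Then dist(p,q) ≤ 2. -/
/-- The planar cross product `cross u v = u₁v₂ − u₂v₁`. -/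
def cross (u v : EuclideanSpace ℝ (Fin 2)) : ℝ := u 0 * v 1 - u 1 * v 0

/-!
Say that `p` is at least as far from the line `ab` as `q`, and let `m` be the foot of the
perpendicular from `q`. Since `q` lies on the same side as `p`, we have `dist p q ≤ dist p m`. Since
neither radius exceeds `dist a b`, the point `m` lies on the segment `ab`, so convexity of the
distance to `p` gives `dist p m ≤ max (dist p a) (dist p b)`.
-/

section Cross

lemma exists_smul_eq_of_cross_eq_zero {u v : EuclideanSpace ℝ (Fin 2)} (hu : u ≠ 0)
    (huv : cross u v = 0) : ∃ t : ℝ, t • u = v := by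
  have hnorm : u 0 ^ 2 + u 1 ^ 2 ≠ 0 := by
    simpa [EuclideanSpace.norm_sq_eq] using pow_ne_zero 2 (norm_ne_zero_iff.2 hu)
  have hparallel : u 0 * v 1 = u 1 * v 0 := sub_eq_zero.1 huv
  refine ⟨(u 0 * v 0 + u 1 * v 1) / (u 0 ^ 2 + u 1 ^ 2), ?_⟩
  refine PiLp.ext fun i ↦ ?_
  rw [PiLp.smul_apply, smul_eq_mul, div_mul_eq_mul_div, div_eq_iff hnorm]
  revert i
  refine Fin.forall_fin_two.2 ⟨?_, ?_⟩
  · linear_combination u 1 * hparallel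
  · linear_combination -u 0 * hparallel

variable {a b : EuclideanSpace ℝ (Fin 2)}

lemma mem_line_of_cross_eq_zero {x : EuclideanSpace ℝ (Fin 2)} (hab : a ≠ b)
    (hx : cross (b - a) (x - a) = 0) : x ∈ line[ℝ, a, b] := by
  have h := vadd_left_mem_affineSpan_pair.2
    (exists_smul_eq_of_cross_eq_zero (sub_ne_zero.2 hab.symm) hx)
  rwa [vadd_eq_add, sub_add_cancel] at h

lemma wSameSide_line_of_cross_mul_cross_nonneg {p q : EuclideanSpace ℝ (Fin 2)} (hab : a ≠ b)
    (hpq : 0 ≤ cross (b - a) (p - a) * cross (b - a) (q - a)) :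
    line[ℝ, a, b].WSameSide p q := by
  rcases eq_or_ne (cross (b - a) (p - a)) 0 with hp | hp
  · exact AffineSubspace.wSameSide_of_left_mem q (mem_line_of_cross_eq_zero hab hp)
  set k := cross (b - a) (q - a) / cross (b - a) (p - a) with hk
  have hk_nonneg : 0 ≤ k := by
    rwa [hk, div_nonneg_iff, ← mul_nonneg_iff, mul_comm]
  have hcross : cross (b - a) (q - k • (p - a) - a) = 0 := by
    calc
      cross (b - a) (q - k • (p - a) - a)
          = cross (b - a) (q - a) - k * cross (b - a) (p - a) := by
        simp only [cross, PiLp.sub_apply, PiLp.smul_apply, smul_eq_mul]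
        ring
      _ = 0 := by rw [hk, div_mul_cancel₀ _ hp, sub_self]
  refine ⟨a, left_mem_affineSpan_pair ℝ a b, q - k • (p - a),
    mem_line_of_cross_eq_zero hab hcross, ?_⟩
  rw [vsub_eq_sub, vsub_eq_sub, sub_sub_cancel]
  exact SameRay.sameRay_nonneg_smul_right (p - a) hk_nonneg

end Cross

lemma wbtw_of_mem_line_of_dist_le {V P : Type*} [NormedAddCommGroup V] [NormedSpace ℝ V]
    [MetricSpace P] [NormedAddTorsor V P] {a b m : P} (hm : m ∈ line[ℝ, a, b])
    (ha : dist m a ≤ dist a b) (hb : dist m b ≤ dist a b) : Wbtw ℝ a m b := by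
  rcases eq_or_ne a b with rfl | hab
  · obtain rfl : m = a := by simpa using hm
    exact wbtw_self_left ℝ m m
  · obtain ⟨t, rfl⟩ := mem_affineSpan_pair_iff_exists_lineMap_eq.1 hm
    rw [dist_lineMap_left, mul_le_iff_le_one_left (dist_pos.2 hab), Real.norm_eq_abs] at ha
    rw [dist_lineMap_right, mul_le_iff_le_one_left (dist_pos.2 hab), Real.norm_eq_abs] at hb
    exact ⟨t, ⟨by linarith [le_abs_self (1 - t)], (le_abs_self t).trans ha⟩, rfl⟩

section HalfLens

open EuclideanGeometry Metric

variable {V P : Type*} [NormedAddCommGroup V] [InnerProductSpace ℝ V] [MetricSpace P]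
  [NormedAddTorsor V P]

section AffineSubspace

variable {s : AffineSubspace ℝ P} [Nonempty s] [s.direction.HasOrthogonalProjection]

lemma sameRay_vsub_orthogonalProjection_of_wSameSide {p q : P} (hpq : s.WSameSide p q) :
    SameRay ℝ (p -ᵥ (orthogonalProjection s p : P)) (q -ᵥ (orthogonalProjection s q : P)) := by
  have starProjection_vsub {x y : P} (hy : y ∈ s) :
      s.directionᗮ.starProjection (x -ᵥ y) = x -ᵥ (orthogonalProjection s x : P) := by
    refine Submodule.eq_starProjection_of_mem_of_inner_eq_zero
      (vsub_orthogonalProjection_mem_direction_orthogonal s x) fun w hw ↦ ?_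
    rw [vsub_sub_vsub_cancel_left]
    exact Submodule.inner_right_of_mem_orthogonal (orthogonalProjection_vsub_mem_direction x hy) hw
  obtain ⟨p', hp', q', hq', hray⟩ := hpq
  simpa only [ContinuousLinearMap.coe_coe, starProjection_vsub hp', starProjection_vsub hq'] using
    hray.map s.directionᗮ.starProjection.toLinearMap

lemma dist_sq_eq_infDist_sub_sq_add_dist_orthogonalProjection_sq {p q : P}
    (hpq : s.WSameSide p q) :
    dist p q ^ 2 = (infDist p s - infDist q s) ^ 2 +
      dist (orthogonalProjection s p) (orthogonalProjection s q) ^ 2 := by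
  set m : P := ↑(orthogonalProjection s p)
  set n : P := ↑(orthogonalProjection s q)
  have hsplit : p -ᵥ q = ((p -ᵥ m) - (q -ᵥ n)) + (m -ᵥ n) := by
    rw [sub_add_eq_add_sub, vsub_add_vsub_cancel, vsub_sub_vsub_cancel_right]
  have horth : inner ℝ ((p -ᵥ m) - (q -ᵥ n)) (m -ᵥ n) = 0 :=
    Submodule.inner_left_of_mem_orthogonal
      (s.vsub_mem_direction (orthogonalProjection_mem p) (orthogonalProjection_mem q))
      (sub_mem (vsub_orthogonalProjection_mem_direction_orthogonal s p)
        (vsub_orthogonalProjection_mem_direction_orthogonal s q))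
  have hheight : ‖(p -ᵥ m) - (q -ᵥ n)‖ = |infDist p s - infDist q s| := by
    rw [(sameRay_vsub_orthogonalProjection_of_wSameSide hpq).norm_sub, ← dist_eq_norm_vsub,
      ← dist_eq_norm_vsub, dist_orthogonalProjection_eq_infDist,
      dist_orthogonalProjection_eq_infDist]
  rw [dist_eq_norm_vsub V p q, hsplit, norm_add_sq_real, horth, hheight, sq_abs, mul_zero,
    add_zero, Subtype.dist_eq, dist_eq_norm_vsub V]

lemma dist_le_dist_orthogonalProjection_of_wSameSide {p q : P} (hpq : s.WSameSide p q)
    (hle : infDist q s ≤ infDist p s) : dist p q ≤ dist p (orthogonalProjection s q) := by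
  have hfoot := dist_sq_eq_infDist_sub_sq_add_dist_orthogonalProjection_sq
    (s.wSameSide_of_right_mem p (orthogonalProjection_mem q))
  rw [infDist_zero_of_mem (orthogonalProjection_mem q), sub_zero,
    orthogonalProjection_orthogonalProjection] at hfoot
  have hheight : (infDist p s - infDist q s) ^ 2 ≤ infDist p s ^ 2 :=
    pow_le_pow_left₀ (sub_nonneg.2 hle) (sub_le_self _ infDist_nonneg) 2
  rw [← sq_le_sq₀ dist_nonneg dist_nonneg, hfoot,
    dist_sq_eq_infDist_sub_sq_add_dist_orthogonalProjection_sq hpq]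
  gcongr

lemma dist_orthogonalProjection_le_dist_of_mem {c : P} (hc : c ∈ s) (p : P) :
    dist (orthogonalProjection s p : P) c ≤ dist p c := by
  have hpc := dist_sq_eq_infDist_sub_sq_add_dist_orthogonalProjection_sq
    (s.wSameSide_of_right_mem p hc)
  rw [Subtype.dist_eq, orthogonalProjection_eq_self_iff.2 hc] at hpc
  rw [← sq_le_sq₀ dist_nonneg dist_nonneg, hpc]
  exact le_add_of_nonneg_left (sq_nonneg _)

end AffineSubspace

lemma wbtw_orthogonalProjection_line {a b q : P} (ha : dist q a ≤ dist a b)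
    (hb : dist q b ≤ dist a b) : Wbtw ℝ a (orthogonalProjection line[ℝ, a, b] q) b :=
  wbtw_of_mem_line_of_dist_le (orthogonalProjection_mem q)
    ((dist_orthogonalProjection_le_dist_of_mem (left_mem_affineSpan_pair ℝ a b) q).trans ha)
    ((dist_orthogonalProjection_le_dist_of_mem (right_mem_affineSpan_pair ℝ a b) q).trans hb)

theorem stmt_5_general {a b p q : P} {r r' : ℝ} (hr : max r r' ≤ dist a b)
    (hp : p ∈ closedBall a r ∩ closedBall b r') (hq : q ∈ closedBall a r ∩ closedBall b r')
    (hside : line[ℝ, a, b].WSameSide p q) : dist p q ≤ max r r' := by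
  wlog hle : infDist q line[ℝ, a, b] ≤ infDist p line[ℝ, a, b] generalizing p q
  · rw [dist_comm]
    exact this hq hp hside.symm (le_of_not_ge hle)
  set m : P := ↑(orthogonalProjection line[ℝ, a, b] q)
  have hm : Wbtw ℝ a m b := wbtw_orthogonalProjection_line
    (hq.1.trans (le_of_max_le_left hr)) (hq.2.trans (le_of_max_le_right hr))
  calc
    dist p q ≤ dist p m := dist_le_dist_orthogonalProjection_of_wSameSide hside hle
    _ = dist m p := dist_comm p m
    _ ≤ max (dist a p) (dist b p) := hm.dist_le_max_dist p
    _ ≤ max r r' := max_le_max (mem_closedBall'.1 hp.1) (mem_closedBall'.1 hp.2)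

end HalfLens

/-- If `dist a b = 2` and `p, q` lie in the lens
`closedBall a 2 ∩ closedBall b 2` on the same closed side of the line through `a`
and `b`, then `dist p q ≤ 2`. -/
theorem stmt_5 (a b : EuclideanSpace ℝ (Fin 2)) (hab : dist a b = 2)
    (p q : EuclideanSpace ℝ (Fin 2))
    (hp : p ∈ Metric.closedBall a 2 ∩ Metric.closedBall b 2)
    (hq : q ∈ Metric.closedBall a 2 ∩ Metric.closedBall b 2)
    (hside : (0 ≤ cross (b - a) (p - a) ∧ 0 ≤ cross (b - a) (q - a)) ∨
             (cross (b - a) (p - a) ≤ 0 ∧ cross (b - a) (q - a) ≤ 0)) :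
    dist p q ≤ 2 := by
  have hne : a ≠ b := dist_ne_zero.1 (by simp [hab])
  simpa using stmt_5_general (by simp [hab]) hp hq
    (wSameSide_line_of_cross_mul_cross_nonneg hne (mul_nonneg_iff.2 hside))
end

section
/- Let p₁, p₂ be distinct points of the Euclidean plane ℝ² with dist(p₁,p₂) ≤ 2, and let x = p₂ + 2·(p₁ − p₂)/‖p₁ − p₂‖ be the point at distance 2 from p₂ on the ray from p₂ through p₁. Then every point q ∈ ℝ² satisfying dist(p₂, q) ≤ 2 and dist(p₁, q) ≤ dist(p₁, p₂) lies in the lens closedBall(x, 2) ∩ closedBall(p₂, 2). -/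
section NormedAddTorsor

open AffineMap Metric

variable {V P : Type*} [SeminormedAddCommGroup V] [NormedSpace ℝ V] [PseudoMetricSpace P]
  [NormedAddTorsor V P]

/- As `1 ≤ c`, the point `q` lies between `p` and `lineMap p q c`, so the two balls are internally
tangent at `p`. -/
theorem closedBall_dist_subset_closedBall_lineMap (p q : P) {c : ℝ} (hc : 1 ≤ c) :
    closedBall q (dist q p) ⊆ closedBall (lineMap p q c) (c * dist q p) := by
  apply closedBall_subset_closedBall'
  have dist_centers : dist q (lineMap p q c) = (c - 1) * dist q p := by
    rw [dist_right_lineMap, Real.norm_of_nonpos (sub_nonpos.mpr hc), neg_sub, dist_comm p q]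
  linarith

theorem stmt_7_general {p₁ p₂ x : P} {r : ℝ} (hne : dist p₁ p₂ ≠ 0) (hd : dist p₁ p₂ ≤ r)
    (hx : x = (r / dist p₁ p₂) • (p₁ -ᵥ p₂) +ᵥ p₂) (q : P)
    (hq₂ : dist p₂ q ≤ r) (hq₁ : dist p₁ q ≤ dist p₁ p₂) :
    q ∈ closedBall x r ∩ closedBall p₂ r := by
  refine ⟨?_, mem_closedBall'.mpr hq₂⟩
  have one_le_ratio : 1 ≤ r / dist p₁ p₂ :=
    (one_le_div (dist_nonneg.lt_of_ne' hne)).mpr hd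
  have hq := closedBall_dist_subset_closedBall_lineMap p₂ p₁ one_le_ratio (mem_closedBall'.mpr hq₁)
  rwa [div_mul_cancel₀ r hne, lineMap_apply, ← hx] at hq

end NormedAddTorsor

/-- Let `p₁ ≠ p₂` in the Euclidean plane with `dist p₁ p₂ ≤ 2` and
let `x = p₂ + 2·(p₁ − p₂)/‖p₁ − p₂‖` be the point at distance `2` from `p₂` on the ray
from `p₂` through `p₁`. Then every point `q` with `dist p₂ q ≤ 2` and
`dist p₁ q ≤ dist p₁ p₂` lies in the lens `closedBall x 2 ∩ closedBall p₂ 2`. -/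
theorem stmt_7 (p₁ p₂ : EuclideanSpace ℝ (Fin 2)) (hne : p₁ ≠ p₂)
    (hd : dist p₁ p₂ ≤ 2)
    (x : EuclideanSpace ℝ (Fin 2))
    (hx : x = p₂ + (2 / ‖p₁ - p₂‖) • (p₁ - p₂)) :
    ∀ q : EuclideanSpace ℝ (Fin 2), dist p₂ q ≤ 2 → dist p₁ q ≤ dist p₁ p₂ →
      q ∈ Metric.closedBall x 2 ∩ Metric.closedBall p₂ 2 := by
  rw [add_comm, ← dist_eq_norm] at hx
  exact stmt_7_general (dist_ne_zero.mpr hne) hd hx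
end

section
/- Let o, cᵢ, cⱼ be points of the Euclidean plane ℝ² and let r₁, rᵢ, rⱼ be positive real numbers with r₁ ≤ rᵢ and r₁ ≤ rⱼ. Suppose dist(o, cᵢ) ≤ r₁ + rᵢ, dist(o, cⱼ) ≤ r₁ + rⱼ, and the unoriented angle ∠ cᵢ o cⱼ is at most π/3. Then dist(cᵢ, cⱼ) ≤ rᵢ + rⱼ; that is, the disks D(cᵢ, rᵢ) and D(cⱼ, rⱼ) intersect. -/
/-!
In a triangle, the side opposite an angle of at most `π / 3` is at most as long as the longer of the
other two sides. For the triangle formed by `o` and the two other centers, those sides have lengths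
at most `r₁ + ri` and `r₁ + rj`, and both bounds are at most `ri + rj`.
-/

open EuclideanGeometry

theorem sq_add_sq_sub_mul_le_sq_max {R : Type*} [CommRing R] [LinearOrder R] [IsStrictOrderedRing R]
    {a b : R} (ha : 0 ≤ a) (hb : 0 ≤ b) : a ^ 2 + b ^ 2 - a * b ≤ max a b ^ 2 := by
  rcases le_total a b with hab | hba
  · rw [max_eq_right hab]
    linarith [mul_le_mul_of_nonneg_left hab ha]
  · rw [max_eq_left hba]
    linarith [mul_le_mul_of_nonneg_right hba hb]

section Triangle

variable {V P : Type*} [NormedAddCommGroup V] [InnerProductSpace ℝ V] [MetricSpace P]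
  [NormedAddTorsor V P]

theorem dist_sq_le_of_angle_le_pi_div_three {p₁ p₂ p₃ : P} (h : ∠ p₁ p₂ p₃ ≤ Real.pi / 3) :
    dist p₁ p₃ ^ 2 ≤ dist p₁ p₂ ^ 2 + dist p₃ p₂ ^ 2 - dist p₁ p₂ * dist p₃ p₂ := by
  have half_le_cos : 1 / 2 ≤ Real.cos (∠ p₁ p₂ p₃) := by
    rw [← Real.cos_pi_div_three]
    exact Real.cos_le_cos_of_nonneg_of_le_pi (angle_nonneg p₁ p₂ p₃)
      (by linarith [Real.pi_pos]) h
  have side_mul_side_nonneg : 0 ≤ dist p₁ p₂ * dist p₃ p₂ := by positivity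
  linarith [law_cos p₁ p₂ p₃, mul_le_mul_of_nonneg_left half_le_cos side_mul_side_nonneg]

theorem dist_le_max_dist_of_angle_le_pi_div_three {p₁ p₂ p₃ : P}
    (h : ∠ p₁ p₂ p₃ ≤ Real.pi / 3) : dist p₁ p₃ ≤ max (dist p₁ p₂) (dist p₃ p₂) :=
  le_of_sq_le_sq
    ((dist_sq_le_of_angle_le_pi_div_three h).trans
      (sq_add_sq_sub_mul_le_sq_max dist_nonneg dist_nonneg))
    (le_max_of_le_left dist_nonneg)

theorem stmt_9_general {o ci cj : P} {r₁ ri rj : ℝ} (h₁i : r₁ ≤ ri) (h₁j : r₁ ≤ rj)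
    (hoi : dist o ci ≤ r₁ + ri) (hoj : dist o cj ≤ r₁ + rj)
    (hangle : ∠ ci o cj ≤ Real.pi / 3) : dist ci cj ≤ ri + rj :=
  calc
    dist ci cj ≤ max (dist ci o) (dist cj o) := dist_le_max_dist_of_angle_le_pi_div_three hangle
    _ ≤ max (r₁ + ri) (r₁ + rj) := by
      rw [dist_comm ci, dist_comm cj]
      exact max_le_max hoi hoj
    _ ≤ ri + rj := max_le (by linarith) (by linarith)

end Triangle

/-- If disks `D(cᵢ, rᵢ)` and `D(cⱼ, rⱼ)`, of radii at least `r₁ > 0`,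
both intersect `D(o, r₁)` and the unoriented angle `∠ cᵢ o cⱼ` is at most `π/3`, then
the two disks intersect: `dist cᵢ cⱼ ≤ rᵢ + rⱼ`. -/
theorem stmt_9 (o ci cj : EuclideanSpace ℝ (Fin 2)) (r₁ ri rj : ℝ)
    (hr₁ : 0 < r₁) (hri : 0 < ri) (hrj : 0 < rj)
    (h₁i : r₁ ≤ ri) (h₁j : r₁ ≤ rj)
    (hoi : dist o ci ≤ r₁ + ri) (hoj : dist o cj ≤ r₁ + rj)
    (hangle : ∠ ci o cj ≤ Real.pi / 3) :
    dist ci cj ≤ ri + rj :=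
  stmt_9_general h₁i h₁j hoi hoj hangle
end

section
/- Let o be a point of the Euclidean plane ℝ², let r₁ > 0, and let a finite family of disks be given by an index set I with centers c : I → ℝ² and radii r : I → ℝ such that r₁ ≤ r(i) and dist(o, c(i)) ≤ r₁ + r(i) for every i ∈ I (i.e., every disk of the family intersects the disk D(o, r₁) and has radius at least r₁). Then there exists a subset S ⊆ I with 6·|S| ≥ |I| such that for all i, j ∈ S, dist(c(i), c(j)) ≤ r(i) + r(j), i.e., the disks indexed by S pairwise intersect. -/
/-!
Cut the plane into six sectors of angle `π / 3` with apex `o`. If two points lie in the same sector,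
the angle they subtend at `o` is not the strictly largest angle of the triangle they form with `o`,
so their distance is at most the larger of their distances to `o`. For centers of disks meeting
`D(o, r₁)` this larger distance is at most `r₁ + max (r i) (r j) ≤ r i + r j`, because both radii
are at least `r₁`. By pigeonhole one of the sectors contains at least a sixth of the centers.
-/

open Module Real
open scoped RealInnerProductSpace

theorem norm_sub_le_max_of_norm_mul_norm_le_two_mul_inner {V : Type*} [SeminormedAddCommGroup V]
    [InnerProductSpace ℝ V] {u v : V} (h : ‖u‖ * ‖v‖ ≤ 2 * ⟪u, v⟫) :
    ‖u - v‖ ≤ max ‖u‖ ‖v‖ := by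
  refine le_of_sq_le_sq ?_ (le_max_of_le_left (norm_nonneg u))
  calc ‖u - v‖ ^ 2 = ‖u‖ ^ 2 - 2 * ⟪u, v⟫ + ‖v‖ ^ 2 := norm_sub_sq_real u v
    _ ≤ ‖u‖ ^ 2 - ‖u‖ * ‖v‖ + ‖v‖ ^ 2 := by gcongr
    _ ≤ max ‖u‖ ‖v‖ ^ 2 := by
      rcases le_total ‖u‖ ‖v‖ with huv | hvu
      · rw [max_eq_right huv]
        nlinarith [norm_nonneg u]
      · rw [max_eq_left hvu]
        nlinarith [norm_nonneg v]

theorem inner_eq_norm_mul_norm_mul_cos_arg_sub_arg (z w : ℂ) :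
    ⟪z, w⟫ = ‖z‖ * ‖w‖ * cos (z.arg - w.arg) := by
  rw [Complex.inner, Complex.mul_re, Complex.conj_re, Complex.conj_im, cos_sub,
    ← Complex.norm_mul_cos_arg z, ← Complex.norm_mul_sin_arg z,
    ← Complex.norm_mul_cos_arg w, ← Complex.norm_mul_sin_arg w]
  ring

/-- The index of the sector containing `z` when the complex plane is cut into `n` half-open sectors
of angle `2 * π / n` with apex `0`. Angles are measured clockwise from the negative real axis, so
that `Complex.arg`, which takes values in `(-π, π]`, yields exactly the indices `0, …, n - 1`. -/
noncomputable def sectorIndex (n : ℕ) (z : ℂ) : ℤ :=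
  ⌊(π - z.arg) / (2 * π / n)⌋

theorem sectorIndex_mem_Ico {n : ℕ} (hn : 0 < n) (z : ℂ) :
    sectorIndex n z ∈ Finset.Ico (0 : ℤ) n := by
  have hangle : 0 < 2 * π / n := by positivity
  rw [Finset.mem_Ico, sectorIndex, Int.floor_nonneg, Int.floor_lt, div_lt_iff₀ hangle,
    Int.cast_natCast, mul_div_cancel₀ _ (by positivity)]
  exact ⟨div_nonneg (by linarith [z.arg_le_pi]) hangle.le, by linarith [z.neg_pi_lt_arg]⟩

theorem abs_arg_sub_arg_lt_of_sectorIndex_eq {n : ℕ} (hn : 0 < n) {z w : ℂ}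
    (h : sectorIndex n z = sectorIndex n w) : |z.arg - w.arg| < 2 * π / n := by
  have hangle : 0 < 2 * π / n := by positivity
  have hlt := Int.abs_sub_lt_one_of_floor_eq_floor h
  rwa [← sub_div, sub_sub_sub_cancel_left, abs_div, abs_of_pos hangle, div_lt_one hangle,
    abs_sub_comm] at hlt

theorem norm_mul_norm_mul_cos_le_inner_of_sectorIndex_eq {n : ℕ} (hn : 2 ≤ n) {z w : ℂ}
    (h : sectorIndex n z = sectorIndex n w) : ‖z‖ * ‖w‖ * cos (2 * π / n) ≤ ⟪z, w⟫ := by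
  have hangle : 2 * π / n ≤ π := by
    rw [div_le_iff₀ (by positivity), mul_comm]
    gcongr
    exact_mod_cast hn
  rw [inner_eq_norm_mul_norm_mul_cos_arg_sub_arg, ← cos_abs (z.arg - w.arg)]
  gcongr
  exact cos_le_cos_of_nonneg_of_le_pi (abs_nonneg _) hangle
    (abs_arg_sub_arg_lt_of_sectorIndex_eq (by lia) h).le

theorem exists_card_le_mul_card_fiber {α β : Type*} [DecidableEq β] {s : Finset α}
    {t : Finset β} {f : α → β} (hf : ∀ a ∈ s, f a ∈ t) (ht : t.Nonempty) :
    ∃ b ∈ t, s.card ≤ t.card * (s.filter (f · = b)).card := by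
  obtain ⟨b, hb, hmax⟩ := t.exists_max_image (fun b ↦ (s.filter (f · = b)).card) ht
  refine ⟨b, hb, ?_⟩
  rw [mul_comm]
  exact Finset.card_le_mul_card_image_of_maps_to hf _ hmax

section Plane

variable {I V P : Type*} [Fintype I] [NormedAddCommGroup V] [InnerProductSpace ℝ V]

theorem exists_card_le_mul_card_forall_norm_mul_norm_mul_cos_le_inner
    (hV : finrank ℝ V = 2) {n : ℕ} (hn : 2 ≤ n) (v : I → V) :
    ∃ S : Finset I, Fintype.card I ≤ n * S.card ∧
      ∀ i ∈ S, ∀ j ∈ S, ‖v i‖ * ‖v j‖ * cos (2 * π / n) ≤ ⟪v i, v j⟫ := by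
  have : FiniteDimensional ℝ V := .of_finrank_pos (by lia)
  let φ : V ≃ₗᵢ[ℝ] ℂ :=
    (Complex.isometryOfOrthonormal ((stdOrthonormalBasis ℝ V).reindex (finCongr hV))).symm
  have hn₀ : 0 < n := by lia
  obtain ⟨k, -, hk⟩ := exists_card_le_mul_card_fiber (s := Finset.univ)
    (fun i _ ↦ sectorIndex_mem_Ico hn₀ (φ (v i))) (Finset.nonempty_Ico.2 (by lia))
  refine ⟨Finset.univ.filter (fun i ↦ sectorIndex n (φ (v i)) = k), by simpa using hk, ?_⟩
  intro i hi j hj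
  have hij : sectorIndex n (φ (v i)) = sectorIndex n (φ (v j)) :=
    (Finset.mem_filter.1 hi).2.trans (Finset.mem_filter.1 hj).2.symm
  simpa only [φ.norm_map, φ.inner_map_map] using
    norm_mul_norm_mul_cos_le_inner_of_sectorIndex_eq hn hij

variable [MetricSpace P] [NormedAddTorsor V P]

theorem exists_card_le_six_mul_card_forall_dist_le_max
    (hV : finrank ℝ V = 2) (o : P) (c : I → P) :
    ∃ S : Finset I, Fintype.card I ≤ 6 * S.card ∧
      ∀ i ∈ S, ∀ j ∈ S, dist (c i) (c j) ≤ max (dist o (c i)) (dist o (c j)) := by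
  obtain ⟨S, hcard, hinner⟩ := exists_card_le_mul_card_forall_norm_mul_norm_mul_cos_le_inner hV
    (n := 6) (by norm_num) (fun i ↦ c i -ᵥ o)
  have hcos : cos (2 * π / (6 : ℕ)) = 1 / 2 := by
    rw [← cos_pi_div_three]
    congr 1
    push_cast
    ring
  refine ⟨S, hcard, fun i hi j hj ↦ ?_⟩
  have hij := hinner i hi j hj
  rw [hcos] at hij
  rw [dist_eq_norm_vsub V, dist_eq_norm_vsub' V o, dist_eq_norm_vsub' V o,
    ← vsub_sub_vsub_cancel_right (c i) (c j) o]
  exact norm_sub_le_max_of_norm_mul_norm_le_two_mul_inner (by linarith)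

theorem stmt_10_general (hV : finrank ℝ V = 2) (o : P) (r₁ : ℝ) (c : I → P) (r : I → ℝ)
    (hr : ∀ i, r₁ ≤ r i) (hint : ∀ i, dist o (c i) ≤ r₁ + r i) :
    ∃ S : Finset I, 6 * S.card ≥ Fintype.card I ∧
      ∀ i ∈ S, ∀ j ∈ S, dist (c i) (c j) ≤ r i + r j := by
  obtain ⟨S, hcard, hdist⟩ := exists_card_le_six_mul_card_forall_dist_le_max hV o c
  refine ⟨S, hcard, fun i hi j hj ↦ (hdist i hi j hj).trans (max_le ?_ ?_)⟩
  · linarith [hint i, hr j]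
  · linarith [hint j, hr i]

end Plane

/-- If every disk of a finite family (centers `c i`, radii `r i ≥ r₁`)
intersects the disk `D(o, r₁)` with `r₁ > 0`, then there is a subfamily `S` with
`6·|S| ≥ |I|` whose disks pairwise intersect. -/
theorem stmt_10 {I : Type*} [Fintype I] (o : EuclideanSpace ℝ (Fin 2)) (r₁ : ℝ)
    (hr₁ : 0 < r₁) (c : I → EuclideanSpace ℝ (Fin 2)) (r : I → ℝ)
    (hr : ∀ i, r₁ ≤ r i) (hint : ∀ i, dist o (c i) ≤ r₁ + r i) :
    ∃ S : Finset I, 6 * S.card ≥ Fintype.card I ∧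
      ∀ i ∈ S, ∀ j ∈ S, dist (c i) (c j) ≤ r i + r j :=
  stmt_10_general finrank_euclideanSpace_fin o r₁ c r hr hint
end
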